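/- arXiv:1901.06029 — 2 statements merged into one kernel-verified Lean document; each statement's English description precedes it below -/
import Mathlib

section
/- Let $k \ge 2$ and let $p_1, \ldots, p_k$ be nonnegative reals with $\sum_{i=1}^k p_i = 1$. Then $(k^k - k) \prod_{i=1}^k p_i + \sum_{i=1}^k p_i^k \le 1$. -/
theorem amgm_partition_inequality (k : ℕ) (hk : 2 ≤ k) (q : Fin k → ℝ)
    (hq : ∀ i, 0 ≤ q i) (hsum : ∑ i, q i = 1) :
    ((k : ℝ) ^ k - k) * ∏ i, q i + ∑ i, (q i) ^ k ≤ 1 := by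
  by_cases h0 : ∃ i, q i = 0
  · obtain ⟨i, hi⟩ := h0
    rw [Finset.prod_eq_zero (Finset.mem_univ i) hi, mul_zero, zero_add, ← hsum]
    refine Finset.sum_le_sum fun j _ => ?_
    have h1 : q j ≤ 1 := by
      rw [← hsum]
      exact Finset.single_le_sum (fun i _ => hq i) (Finset.mem_univ j)
    exact pow_le_of_le_one (hq j) h1 (by omega)
  push Not at h0
  have hpos : ∀ i, 0 < q i := fun i => lt_of_le_of_ne (hq i) (h0 i).symm
  set P := ∏ i, q i with hP
  have hPpos : 0 < P := Finset.prod_pos fun i _ => hpos i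
  have hlogP : ∑ i, Real.log (q i) = Real.log P := by
    rw [hP, Real.log_prod (fun i _ => h0 i)]
  let h : (Fin k → Fin k) → ℝ := fun f =>
    (∏ j, q (f j)) - P - P * ((∑ j, Real.log (q (f j))) - Real.log P)
  have hnn : ∀ f, 0 ≤ h f := by
    intro f
    have hm : 0 < ∏ j, q (f j) := Finset.prod_pos fun i _ => hpos _
    have h1 := Real.log_le_sub_one_of_pos (div_pos hm hPpos)
    rw [Real.log_div hm.ne' hPpos.ne', Real.log_prod (fun i _ => h0 _)] at h1
    have h2 := mul_le_mul_of_nonneg_left h1 hPpos.le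
    have h3 : P * ((∏ j, q (f j)) / P - 1) = (∏ j, q (f j)) - P := by
      field_simp
    simp only [h]
    linarith
  have hk0 : 0 < k := by omega
  have hinj : Function.Injective (fun (i : Fin k) => (fun _ => i : Fin k → Fin k)) := by
    intro a b hab
    exact congrFun hab ⟨0, hk0⟩
  have hle : ∑ i : Fin k, h (fun _ => i) ≤ ∑ f, h f := by
    rw [← Finset.sum_image (s := Finset.univ) (f := h) (g := fun (i : Fin k) => (fun _ => i : Fin k → Fin k)) hinj.injOn]
    exact Finset.sum_le_sum_of_subset_of_nonneg (Finset.subset_univ _) fun f _ _ => hnn f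
  have hconst : ∑ i : Fin k, h (fun _ => i) = ∑ i, q i ^ k - k * P := by
    simp only [h, Finset.sum_sub_distrib, ← Finset.mul_sum, Finset.prod_const, Finset.sum_const,
      Finset.card_univ, Fintype.card_fin, nsmul_eq_mul, hlogP]
    ring
  have hm : ∑ f : Fin k → Fin k, ∏ j, q (f j) = 1 := by
    have := Finset.prod_univ_sum (fun _ : Fin k => (Finset.univ : Finset (Fin k))) (fun _ i => q i)
    rw [Fintype.piFinset_univ] at this
    rw [← this, hsum]
    simp
  have hl : ∑ f : Fin k → Fin k, ∑ j, Real.log (q (f j)) = (k : ℝ) ^ k * Real.log P := by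
    rw [Finset.sum_comm]
    have : ∀ j : Fin k, ∑ f : Fin k → Fin k, Real.log (q (f j))
        = (k : ℝ) ^ (k - 1) * Real.log P := by
      intro j
      have := Fintype.sum_piFinset_apply (fun i => Real.log (q i)) (Finset.univ : Finset (Fin k)) j
      rw [Fintype.piFinset_univ] at this
      rw [this, hlogP]
      simp
    simp only [this, Finset.sum_const, Finset.card_univ, Fintype.card_fin, nsmul_eq_mul]
    rw [← mul_assoc, ← pow_succ', Nat.sub_add_cancel hk0]
  have hall : ∑ f, h f = 1 - (k : ℝ) ^ k * P := by
    simp only [h, Finset.sum_sub_distrib, ← Finset.mul_sum, hm, hl, Finset.sum_const,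
      Finset.card_univ, Fintype.card_fun, Fintype.card_fin, nsmul_eq_mul, Nat.cast_pow]
    ring
  rw [hconst, hall] at hle
  linarith
end

section
/- If $s$ is a power of $k$ (say $s = k^t$, $t \ge 0$) and $k \ge 2$, then $g_k(s) = (s^k - s)/(k^k - k)$. -/
/-- `p n k` : maximum of `∏ q i` over partitions of `n` into `k` nonnegative
parts each strictly less than `n` (so `p 0 0 = 1`). -/
noncomputable def p (n k : ℕ) : ℕ :=
  sSup {m | ∃ q : Fin k → ℕ, (∑ i, q i) = n ∧ (∀ i, q i < n) ∧ m = ∏ i, q i}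

/-- The Erdős–Hajnal function `g k s`: `g k s = 0` for `s < k` and otherwise the
maximum of `∑ i, g k (s i) + ∏ i, s i` over nontrivial partitions of `s` into `k` parts. -/
noncomputable def g (k : ℕ) (s : ℕ) : ℕ :=
  Nat.strongRecOn s fun s ih =>
    if s < k then 0
    else sSup {m | ∃ q : Fin k → ℕ, ∃ h : ∀ i, q i < s,
      (∑ i, q i) = s ∧ m = (∑ i, ih (q i) (h i)) + ∏ i, q i}

theorem g_unfold (k s : ℕ) : g k s = if s < k then 0
    else sSup {m | ∃ q : Fin k → ℕ, ∃ _h : ∀ i, q i < s,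
      (∑ i, q i) = s ∧ m = (∑ i, g k (q i)) + ∏ i, q i} := by
  unfold g
  rw [Nat.strongRecOn_eq]

theorem amgm_aux (k : ℕ) [NeZero k] (q : Fin k → ℝ) (hq : ∀ i, 0 ≤ q i) (f : Fin k → Fin k) :
    (∏ i, q i) ≤ ∑ c : Fin k, (1 / (k : ℝ)) * ∏ j, q (f j + c) := by
  have hk0 : (k : ℝ) ≠ 0 := by exact_mod_cast NeZero.ne k
  have h := Real.geom_mean_le_arith_mean_weighted Finset.univ (fun _ : Fin k => 1 / (k : ℝ))
    (fun c => ∏ j, q (f j + c)) (fun _ _ => by positivity)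
    (by simp [hk0]) (fun c _ => Finset.prod_nonneg fun j _ => hq _)
  refine le_trans (le_of_eq ?_) h
  rw [Real.finsetProd_rpow _ _ (fun c _ => Finset.prod_nonneg fun j _ => hq _), Finset.prod_comm]
  have : ∀ j, ∏ c, q (f j + c) = ∏ c, q c := fun j =>
    Equiv.prod_comp (Equiv.addLeft (f j)) q
  simp only [this, Finset.prod_const, Finset.card_univ, Fintype.card_fin]
  rw [one_div, Real.pow_rpow_inv_natCast (Finset.prod_nonneg fun j _ => hq _) (NeZero.ne k)]

theorem key_ineq (k : ℕ) [NeZero k] (q : Fin k → ℝ) (hq : ∀ i, 0 ≤ q i) :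
    (∑ i, q i ^ k) + ((k : ℝ) ^ k - k) * ∏ i, q i ≤ (∑ i, q i) ^ k := by
  classical
  have hk0 : (k : ℝ) ≠ 0 := by exact_mod_cast NeZero.ne k
  set A : (Fin k → Fin k) → ℝ := fun f => ∑ c : Fin k, (1 / (k : ℝ)) * ∏ j, q (f j + c) with hA
  have h1 : (∑ i, q i) ^ k = ∑ f, A f := by
    rw [Fintype.sum_pow, hA, Finset.sum_comm]
    have : ∀ c : Fin k, ∑ f : Fin k → Fin k, (1 / (k : ℝ)) * ∏ j, q (f j + c)
        = (1 / (k : ℝ)) * ∑ f : Fin k → Fin k, ∏ j, q (f j) := by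
      intro c
      rw [← Finset.mul_sum]
      congr 1
      exact Equiv.sum_comp (Equiv.addRight (fun _ : Fin k => c))
        (fun f : Fin k → Fin k => ∏ j, q (f j))
    simp only [this, Finset.sum_const, Finset.card_univ, Fintype.card_fin, nsmul_eq_mul]
    field_simp
  have hinj : Function.Injective (fun (c : Fin k) => (fun _ : Fin k => c)) := by
    intro a b h
    exact congrFun h 0
  set C : Finset (Fin k → Fin k) := Finset.univ.image (fun c _ => c) with hC
  have hcard : C.card = k := by
    rw [hC, Finset.card_image_of_injective _ hinj]; simp
  have h2 : ∑ f ∈ C, A f = ∑ i, q i ^ k := by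
    rw [hC, Finset.sum_image (fun a _ b _ h => hinj h)]
    have : ∀ a : Fin k, A (fun _ => a) = (1 / (k : ℝ)) * ∑ c, q c ^ k := by
      intro a
      simp only [hA, Finset.prod_const, Finset.card_univ, Fintype.card_fin]
      rw [← Finset.mul_sum]
      congr 1
      exact Equiv.sum_comp (Equiv.addLeft a) (fun c => q c ^ k)
    simp only [this, Finset.sum_const, Finset.card_univ, Fintype.card_fin, nsmul_eq_mul]
    field_simp
  have h3 : ((k : ℝ) ^ k - k) * ∏ i, q i ≤ ∑ f ∈ Cᶜ, A f := by
    have h := Finset.card_nsmul_le_sum Cᶜ A (∏ i, q i) (fun f _ => amgm_aux k q hq f)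
    refine le_trans (le_of_eq ?_) h
    have hc := Finset.card_add_card_compl C
    rw [hcard, Fintype.card_fun, Fintype.card_fin] at hc
    have hc' : (k : ℝ) + (Cᶜ.card : ℝ) = (k : ℝ) ^ k := by exact_mod_cast hc
    rw [nsmul_eq_mul, ← hc']
    ring
  rw [h1, ← Finset.sum_add_sum_compl C, h2]
  linarith

theorem den_pos (k : ℕ) (hk : 2 ≤ k) : (0 : ℝ) < (k : ℝ) ^ k - k := by
  have : k ^ 1 < k ^ k := Nat.pow_lt_pow_right (by omega) (by omega)
  have h : ((k ^ 1 : ℕ) : ℝ) < ((k ^ k : ℕ) : ℝ) := by exact_mod_cast this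
  push_cast at h
  linarith

theorem step_bound (k : ℕ) (hk : 2 ≤ k) (s : ℕ)
    (ih : ∀ r < s, (g k r : ℝ) ≤ ((r : ℝ) ^ k - r) / ((k : ℝ) ^ k - k))
    (m : ℕ) (hm : ∃ q : Fin k → ℕ, ∃ _h : ∀ i, q i < s,
      (∑ i, q i) = s ∧ m = (∑ i, g k (q i)) + ∏ i, q i) :
    (m : ℝ) ≤ ((s : ℝ) ^ k - s) / ((k : ℝ) ^ k - k) := by
  obtain ⟨q, h, hs, rfl⟩ := hm
  haveI : NeZero k := ⟨by omega⟩
  have hd := den_pos k hk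
  have key := key_ineq k (fun i => (q i : ℝ)) (fun i => by positivity)
  have hs' : (∑ i, (q i : ℝ)) = s := by exact_mod_cast hs
  rw [hs'] at key
  have hsum : ∑ i, (g k (q i) : ℝ) ≤ ∑ i, ((q i : ℝ) ^ k - q i) / ((k : ℝ) ^ k - k) :=
    Finset.sum_le_sum fun i _ => ih _ (h i)
  rw [← Finset.sum_div, Finset.sum_sub_distrib, hs', le_div_iff₀ hd] at hsum
  push_cast
  rw [le_div_iff₀ hd]
  linarith

theorem g_upper (k : ℕ) (hk : 2 ≤ k) (s : ℕ) :
    (g k s : ℝ) ≤ ((s : ℝ) ^ k - s) / ((k : ℝ) ^ k - k) := by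
  induction s using Nat.strong_induction_on with
  | _ s ih =>
    have hd := den_pos k hk
    have hB : (0 : ℝ) ≤ ((s : ℝ) ^ k - s) / ((k : ℝ) ^ k - k) := by
      apply div_nonneg _ hd.le
      have : s ≤ s ^ k := Nat.le_self_pow (by omega) s
      have : (s : ℝ) ≤ (s : ℝ) ^ k := by exact_mod_cast this
      linarith
    rw [g_unfold]
    split_ifs with hsk
    · simpa using hB
    · rw [← Nat.le_floor_iff hB]
      apply csSup_le'
      intro m hm
      exact Nat.le_floor (step_bound k hk s ih m hm)

theorem g_lower (k : ℕ) (hk : 2 ≤ k) (t : ℕ) :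
    k * g k (k ^ t) + (k ^ t) ^ k ≤ g k (k ^ (t + 1)) := by
  rw [g_unfold k (k ^ (t + 1)), if_neg (not_lt.mpr (Nat.le_self_pow (by omega) k))]
  apply le_csSup
  · refine ⟨⌊(((k ^ (t + 1) : ℕ) : ℝ) ^ k - (k ^ (t + 1) : ℕ)) / ((k : ℝ) ^ k - k)⌋₊, ?_⟩
    intro m hm
    exact Nat.le_floor (step_bound k hk _ (fun r _ => g_upper k hk r) m hm)
  · refine ⟨fun _ => k ^ t, fun _ => Nat.pow_lt_pow_right (by omega) (by omega), ?_, ?_⟩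
    · simp [pow_succ, mul_comm]
    · simp

theorem g_power_of_k (k t : ℕ) (hk : 2 ≤ k) :
    (g k (k ^ t) : ℝ) = (((k : ℝ) ^ t) ^ k - (k : ℝ) ^ t) / ((k : ℝ) ^ k - k) := by
  have hd := den_pos k hk
  apply le_antisymm
  · have := g_upper k hk (k ^ t)
    push_cast at this
    exact this
  · induction t with
    | zero => simp
    | succ t ih =>
      have h : (k : ℝ) * g k (k ^ t) + ((k : ℝ) ^ t) ^ k ≤ g k (k ^ (t + 1)) := by
        exact_mod_cast g_lower k hk t
      rw [div_le_iff₀ hd] at ih ⊢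
      have h2 := mul_le_mul_of_nonneg_right h hd.le
      have h3 := mul_le_mul_of_nonneg_left ih (Nat.cast_nonneg (α := ℝ) k)
      have h4 : ((k : ℝ) ^ (t + 1)) ^ k = ((k : ℝ) ^ t) ^ k * (k : ℝ) ^ k := by
        rw [pow_succ, mul_pow]
      have h5 : (k : ℝ) ^ (t + 1) = (k : ℝ) ^ t * k := pow_succ _ _
      rw [h4, h5]
      nlinarith
end
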